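/- If a geodesic triangle in a CAT(0) space has the property that the Alexandrov angle at every interior point of each side equals π and the angles at the three vertices equal the corresponding Euclidean comparison angles, then the triangle with its interior is isometric to a Euclidean triangle (flat triangle rigidity: if one comparison angle equality holds, the triangle is flat). -/

import Mathlib

/-- A (unit-speed) geodesic segment from `x` to `y`, defined on `[0, dist x y]`. -/
def IsGeodesic {X : Type*} [MetricSpace X] (x y : X) (γ : ℝ → X) : Prop :=
  γ 0 = x ∧ γ (dist x y) = y ∧
    ∀ s ∈ Set.Icc (0:ℝ) (dist x y), ∀ t ∈ Set.Icc (0:ℝ) (dist x y),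
      dist (γ s) (γ t) = |s - t|

/-- A geodesic metric space: every pair of points is joined by a geodesic. -/
def GeodesicSpace (X : Type*) [MetricSpace X] : Prop :=
  ∀ x y : X, ∃ γ : ℝ → X, IsGeodesic x y γ

/-- The CAT(0) comparison axiom: for every geodesic triangle and every comparison
triangle in the Euclidean plane with the same side lengths, distances from the third
vertex to points of a side are bounded by the corresponding Euclidean distances. -/
def CAT0 (X : Type*) [MetricSpace X] : Prop :=
  GeodesicSpace X ∧
    ∀ (x₁ x₂ x₃ : X) (γ : ℝ → X), IsGeodesic x₁ x₂ γ →
      ∀ x₁' x₂' x₃' : EuclideanSpace ℝ (Fin 2),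
        dist x₁' x₂' = dist x₁ x₂ → dist x₁' x₃' = dist x₁ x₃ →
        dist x₂' x₃' = dist x₂ x₃ →
        ∀ t ∈ Set.Icc (0:ℝ) (dist x₁ x₂),
          dist x₃ (γ t) ≤ dist x₃' (x₁' + (t / dist x₁ x₂) • (x₂' - x₁'))

/-- A subset is (geodesically) convex if it contains every geodesic segment
between any two of its points. -/
def IsConvexSet {X : Type*} [MetricSpace X] (C : Set X) : Prop :=
  ∀ x ∈ C, ∀ y ∈ C, ∀ γ : ℝ → X, IsGeodesic x y γ →
    ∀ t ∈ Set.Icc (0:ℝ) (dist x y), γ t ∈ C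

/-- The Euclidean comparison angle at `p` of the triple `(p, a, b)`, given by the
law of cosines. -/
noncomputable def compAngle {X : Type*} [MetricSpace X] (p a b : X) : ℝ :=
  Real.arccos ((dist p a ^ 2 + dist p b ^ 2 - dist a b ^ 2) /
    (2 * dist p a * dist p b))

/-- The Alexandrov (upper) angle at `p` between two geodesics `γ₁, γ₂` issuing
from `p`: the limsup of comparison angles of small triangles at `p`. -/
noncomputable def alexAngle {X : Type*} [MetricSpace X] (p : X) (γ₁ γ₂ : ℝ → X) : ℝ :=
  Filter.limsup (fun t => compAngle p (γ₁ t) (γ₂ t)) (nhdsWithin (0:ℝ) (Set.Ioi 0))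

/-- The geodesic convex hull of a set: the smallest geodesically convex set
containing it. -/
def geodesicConvexHull {X : Type*} [MetricSpace X] (S : Set X) : Set X :=
  ⋂₀ {C : Set X | IsConvexSet C ∧ S ⊆ C}

/-!
Call a triangle flat if the distances from its apex to the points of the opposite side satisfy
Stewart's theorem, the equality case of the CN inequality. Flatness passes to subsegments of the
side because restricting a geodesic preserves Stewart's formula, and by the first variation of the
distance along a side it does not depend on the choice of the apex. Comparison angles decrease as
the sides at `x` shrink, and the Alexandrov angle is a lower bound for all of them; if it already
attains the comparison angle of the whole triangle, then none of them drops and the triangle is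
flat. Coning the opposite side to `x` then parametrizes the geodesic triangle and its comparison
triangle with the same mutual distances, and since geodesics are unique this cone is convex, so it
is the convex hull of the vertices.
-/

open scoped unitInterval Congruent

section ComparisonInner

section PseudoMetricSpace

variable {X : Type*} [PseudoMetricSpace X]

/-- The comparison inner product of `a` and `b` at `p`: the value that the law of cosines gives to
`⟪a - p, b - p⟫`. Being polynomial in the distances, it replaces the comparison angle, whose value
is junk when `a` or `b` equals `p`. -/
noncomputable def compInner (p a b : X) : ℝ :=
  (dist p a ^ 2 + dist p b ^ 2 - dist a b ^ 2) / 2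

lemma compInner_comm (p a b : X) : compInner p a b = compInner p b a := by
  unfold compInner
  rw [dist_comm a b]
  ring

lemma dist_sq_eq_sub_two_mul_compInner (p a b : X) :
    dist a b ^ 2 = dist p a ^ 2 + dist p b ^ 2 - 2 * compInner p a b := by
  unfold compInner
  ring

lemma abs_compInner_le (p a b : X) : |compInner p a b| ≤ dist p a * dist p b := by
  have lower : |dist p a - dist p b| ≤ dist a b := by
    simpa only [dist_comm p] using abs_dist_sub_le a b p
  have upper : dist a b ≤ dist p a + dist p b := dist_triangle_left a b p
  have lower_sq := sq_le_sq.2 (lower.trans (le_abs_self _))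
  have upper_sq := pow_le_pow_left₀ dist_nonneg upper 2
  unfold compInner
  rw [abs_le]
  constructor <;> linarith

-- Bound `dist p m` below by `dist p b - dist m b`; the error `r * (1 - r) / 2 * dist a p ^ 2` is of
-- second order as `p` tends to `a`.
lemma compInner_le_of_dist_eq {a b m : X} {r : ℝ} (hr : r ∈ I) (ham : dist a m = r * dist a b)
    (hmb : dist m b = (1 - r) * dist a b) (p : X) :
    compInner a p m ≤ r * compInner a p b + (1 - r) / 2 * dist a p ^ 2 := by
  have hpb : dist p b ^ 2 ≤ (dist p m + (1 - r) * dist a b) ^ 2 :=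
    pow_le_pow_left₀ dist_nonneg (hmb ▸ dist_triangle p m b) 2
  have weighted := mul_le_mul_of_nonneg_left hpb hr.1
  have square : 0 ≤ (1 - r) * (dist p m - r * dist a b) ^ 2 :=
    mul_nonneg (sub_nonneg.2 hr.2) (sq_nonneg _)
  unfold compInner
  rw [ham]
  linarith

end PseudoMetricSpace

section Euclidean

variable {V P : Type*} [NormedAddCommGroup V] [InnerProductSpace ℝ V]

lemma compInner_eq_inner [PseudoMetricSpace P] [NormedAddTorsor V P] (p a b : P) :
    compInner p a b = inner ℝ (a -ᵥ p) (b -ᵥ p) := by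
  rw [real_inner_eq_norm_mul_self_add_norm_mul_self_sub_norm_sub_mul_self_div_two,
    vsub_sub_vsub_cancel_right, ← dist_eq_norm_vsub V, ← dist_eq_norm_vsub V,
    ← dist_eq_norm_vsub V, dist_comm a p, dist_comm b p, compInner]
  ring

lemma compInner_lineMap_lineMap [PseudoMetricSpace P] [NormedAddTorsor V P] (p a b : P)
    (s t : ℝ) :
    compInner p (AffineMap.lineMap p a s) (AffineMap.lineMap p b t) =
      s * t * compInner p a b := by
  simp only [compInner_eq_inner (V := V), AffineMap.lineMap_vsub_left, inner_smul_left,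
    inner_smul_right, RCLike.conj_to_real, mul_assoc, mul_left_comm]

lemma dist_lineMap_sq [PseudoMetricSpace P] [NormedAddTorsor V P] (p a b : P) (s : ℝ) :
    dist p (AffineMap.lineMap a b s) ^ 2 =
      (1 - s) * dist p a ^ 2 + s * dist p b ^ 2 - s * (1 - s) * dist a b ^ 2 := by
  have h := compInner_lineMap_lineMap a b p s 1
  rw [AffineMap.lineMap_apply_one] at h
  rw [dist_comm p, dist_sq_eq_sub_two_mul_compInner a, h, dist_left_lineMap, mul_pow,
    Real.norm_eq_abs, sq_abs, dist_comm a p, dist_comm p b, dist_sq_eq_sub_two_mul_compInner a b p,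
    dist_comm a p]
  ring

end Euclidean

section MetricSpace

variable {X : Type*} [MetricSpace X]

lemma compAngle_eq_arccos (p a b : X) :
    compAngle p a b = Real.arccos (compInner p a b / (dist p a * dist p b)) := by
  unfold compAngle compInner
  rw [div_div, mul_assoc]

lemma dist_mul_dist_mul_cos_compAngle (p a b : X) :
    dist p a * dist p b * Real.cos (compAngle p a b) = compInner p a b := by
  have bound := abs_compInner_le p a b
  have ratio : |compInner p a b / (dist p a * dist p b)| ≤ 1 := by
    rw [abs_div, abs_of_nonneg (by positivity : 0 ≤ dist p a * dist p b)]
    exact div_le_one_of_le₀ bound (by positivity)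
  rw [compAngle_eq_arccos, Real.cos_arccos (abs_le.1 ratio).1 (abs_le.1 ratio).2]
  refine mul_div_cancel_of_imp' fun h ↦ ?_
  rwa [h, abs_nonpos_iff] at bound

lemma angle_eq_compAngle {V P : Type*} [NormedAddCommGroup V] [InnerProductSpace ℝ V]
    [MetricSpace P] [NormedAddTorsor V P] (a p b : P) :
    EuclideanGeometry.angle a p b = compAngle p a b := by
  rw [compAngle_eq_arccos, compInner_eq_inner (V := V), dist_comm p a, dist_comm p b,
    dist_eq_norm_vsub V, dist_eq_norm_vsub V]
  rfl

lemma exists_comparison_triangle (p a b : X) :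
    ∃ p' a' b' : EuclideanSpace ℝ (Fin 2),
      dist p' a' = dist p a ∧ dist p' b' = dist p b ∧ dist a' b' = dist a b := by
  set θ := compAngle p a b
  have hcos : dist p a * dist p b * Real.cos θ = compInner p a b :=
    dist_mul_dist_mul_cos_compAngle p a b
  have hsq := Real.sin_sq_add_cos_sq θ
  refine ⟨0, !₂[dist p a, 0], !₂[dist p b * Real.cos θ, dist p b * Real.sin θ], ?_, ?_, ?_⟩ <;>
    refine (pow_left_inj₀ dist_nonneg dist_nonneg two_ne_zero).1 ?_ <;>
    simp only [EuclideanSpace.dist_sq_eq, Fin.sum_univ_two, Real.dist_eq, sq_abs,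
      PiLp.zero_apply, Matrix.cons_val_zero, Matrix.cons_val_one, Matrix.cons_val_fin_one]
  · ring
  · linear_combination dist p b ^ 2 * hsq
  · linear_combination dist p b ^ 2 * hsq - 2 * hcos - dist_sq_eq_sub_two_mul_compInner p a b

end MetricSpace

end ComparisonInner

section Geodesic

variable {X : Type*} [MetricSpace X] {a b : X}

lemma mul_dist_mem_Icc (s : I) (a b : X) : s * dist a b ∈ Set.Icc 0 (dist a b) :=
  ⟨mul_nonneg s.2.1 dist_nonneg, mul_le_of_le_one_left dist_nonneg s.2.2⟩

namespace IsGeodesic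

variable {γ : ℝ → X} {t : ℝ}

lemma dist_left (hγ : IsGeodesic a b γ) (ht : t ∈ Set.Icc 0 (dist a b)) : dist a (γ t) = t := by
  have h := hγ.2.2 0 ⟨le_rfl, dist_nonneg⟩ t ht
  rwa [hγ.1, zero_sub, abs_neg, abs_of_nonneg ht.1] at h

lemma dist_right (hγ : IsGeodesic a b γ) (ht : t ∈ Set.Icc 0 (dist a b)) :
    dist (γ t) b = dist a b - t := by
  have h := hγ.2.2 t ht (dist a b) ⟨dist_nonneg, le_rfl⟩
  rwa [hγ.2.1, abs_sub_comm, abs_of_nonneg (sub_nonneg.2 ht.2)] at h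

lemma initial (hγ : IsGeodesic a b γ) (ht : t ∈ Set.Icc 0 (dist a b)) :
    IsGeodesic a (γ t) γ := by
  unfold IsGeodesic
  rw [hγ.dist_left ht]
  exact ⟨hγ.1, rfl, fun s hs u hu ↦
    hγ.2.2 s ⟨hs.1, hs.2.trans ht.2⟩ u ⟨hu.1, hu.2.trans ht.2⟩⟩

end IsGeodesic

namespace CAT0

/-- The constant-speed geodesic from `a` to `b`, with time in the unit interval: the analogue of
`AffineMap.lineMap`. The geodesic is chosen; it is unique by `CAT0.eq_lineMap`. -/
noncomputable def lineMap (hX : CAT0 X) (a b : X) (s : I) : X :=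
  (hX.1 a b).choose (s * dist a b)

variable (hX : CAT0 X)

lemma dist_lineMap_lineMap (a b : X) (s t : I) :
    dist (hX.lineMap a b s) (hX.lineMap a b t) = |(s : ℝ) - t| * dist a b := by
  refine ((hX.1 a b).choose_spec.2.2 _ (mul_dist_mem_Icc s a b) _ (mul_dist_mem_Icc t a b)).trans ?_
  rw [← sub_mul, abs_mul, abs_of_nonneg (dist_nonneg (x := a))]

@[simp]
lemma lineMap_zero (a b : X) : hX.lineMap a b 0 = a := by
  rw [lineMap, Set.Icc.coe_zero, zero_mul, (hX.1 a b).choose_spec.1]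

@[simp]
lemma lineMap_one (a b : X) : hX.lineMap a b 1 = b := by
  rw [lineMap, Set.Icc.coe_one, one_mul, (hX.1 a b).choose_spec.2.1]

lemma dist_left_lineMap (a b : X) (s : I) : dist a (hX.lineMap a b s) = s * dist a b :=
  (hX.1 a b).choose_spec.dist_left (mul_dist_mem_Icc s a b)

lemma dist_lineMap_right (a b : X) (s : I) :
    dist (hX.lineMap a b s) b = (1 - s) * dist a b := by
  rw [sub_mul, one_mul]
  exact (hX.1 a b).choose_spec.dist_right (mul_dist_mem_Icc s a b)

-- This is the CN inequality of Bruhat and Tits, at an arbitrary point of the segment.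
lemma dist_lineMap_sq_le (p a b : X) (s : I) :
    dist p (hX.lineMap a b s) ^ 2 ≤
      (1 - s) * dist p a ^ 2 + s * dist p b ^ 2 - s * (1 - s) * dist a b ^ 2 := by
  obtain ⟨a', b', p', hab, hap, hbp⟩ := exists_comparison_triangle a b p
  have comparison := hX.2 a b p _ (hX.1 a b).choose_spec a' b' p' hab hap hbp _
    (mul_dist_mem_Icc s a b)
  have foot : a' + (s * dist a b / dist a b) • (b' - a') = AffineMap.lineMap a' b' (s : ℝ) := by
    rw [AffineMap.lineMap_apply_module', add_comm]
    rcases eq_or_ne (dist a b) 0 with h | h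
    · rw [dist_eq_zero.1 (hab.trans h), sub_self, smul_zero, smul_zero]
    · rw [mul_div_cancel_right₀ _ h]
  rw [foot] at comparison
  refine (pow_le_pow_left₀ dist_nonneg comparison 2).trans_eq ?_
  rw [dist_lineMap_sq, dist_comm p' a', dist_comm p' b', hab, hap, hbp, dist_comm a p,
    dist_comm b p]

lemma eq_lineMap {m : X} {s : I} (ham : dist a m = s * dist a b)
    (hmb : dist m b = (1 - s) * dist a b) : m = hX.lineMap a b s := by
  have h := hX.dist_lineMap_sq_le m a b s
  rw [dist_comm m a, ham, hmb] at h
  have hsq : dist m (hX.lineMap a b s) ^ 2 ≤ 0 := h.trans_eq (by ring)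
  exact dist_eq_zero.1 (sq_nonpos_iff _ |>.1 hsq)

lemma lineMap_of_isGeodesic {γ : ℝ → X} (hγ : IsGeodesic a b γ) (s : I) :
    hX.lineMap a b s = γ (s * dist a b) := by
  have hs := mul_dist_mem_Icc s a b
  exact (hX.eq_lineMap (hγ.dist_left hs) (by rw [hγ.dist_right hs]; ring)).symm

lemma exists_lineMap_eq {γ : ℝ → X} (hγ : IsGeodesic a b γ) {t : ℝ}
    (ht : t ∈ Set.Icc 0 (dist a b)) : ∃ s : I, s * dist a b = t ∧ γ t = hX.lineMap a b s := by
  have hs : t / dist a b * dist a b = t :=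
    div_mul_cancel_of_imp fun h ↦ le_antisymm (h ▸ ht.2) ht.1
  refine ⟨⟨t / dist a b, unitInterval.div_mem ht.1 dist_nonneg ht.2⟩, hs, ?_⟩
  rw [hX.lineMap_of_isGeodesic hγ, hs]

lemma lineMap_lineMap_lineMap (a b : X) {r q l w : I}
    (hw : (w : ℝ) = (1 - l) * r + l * q) :
    hX.lineMap (hX.lineMap a b r) (hX.lineMap a b q) l = hX.lineMap a b w := by
  have hrw : (r : ℝ) - w = l * (r - q) := by rw [hw]; ring
  have hwq : (w : ℝ) - q = (1 - l) * (r - q) := by rw [hw]; ring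
  refine (hX.eq_lineMap ?_ ?_).symm
  · rw [dist_lineMap_lineMap, dist_lineMap_lineMap, hrw, abs_mul, abs_of_nonneg l.2.1, mul_assoc]
  · rw [dist_lineMap_lineMap, dist_lineMap_lineMap, hwq, abs_mul,
      abs_of_nonneg (sub_nonneg.2 l.2.2), mul_assoc]

end CAT0

end Geodesic

section Angle

namespace CAT0

variable {X : Type*} [MetricSpace X] {x y z : X}

lemma mul_compInner_le_compInner_lineMap (hX : CAT0 X) (x y z : X) (s : I) :
    s * compInner x y z ≤ compInner x (hX.lineMap x y s) z := by
  have h := hX.dist_lineMap_sq_le z x y s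
  unfold compInner
  rw [dist_left_lineMap, dist_comm _ z]
  rw [dist_comm z x, dist_comm z y] at h
  rw [dist_comm z _] at h ⊢
  linarith

lemma mul_compInner_le_compInner_lineMap_lineMap (hX : CAT0 X) (x y z : X) (s t : I) :
    s * t * compInner x y z ≤ compInner x (hX.lineMap x y s) (hX.lineMap x z t) := by
  calc s * t * compInner x y z
      = t * (s * compInner x y z) := by ring
    _ ≤ t * compInner x (hX.lineMap x y s) z :=
        mul_le_mul_of_nonneg_left (hX.mul_compInner_le_compInner_lineMap x y z s) t.2.1
    _ ≤ compInner x (hX.lineMap x y s) (hX.lineMap x z t) := by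
        rw [compInner_comm x _ z, compInner_comm x _ (hX.lineMap x z t)]
        exact hX.mul_compInner_le_compInner_lineMap x z _ t

lemma compAngle_lineMap_lineMap_le (hX : CAT0 X) (x y z : X) {s t : I} (hs : 0 < s) (ht : 0 < t) :
    compAngle x (hX.lineMap x y s) (hX.lineMap x z t) ≤ compAngle x y z := by
  have hst : (0 : ℝ) < s * t := mul_pos hs ht
  simp only [compAngle_eq_arccos, dist_left_lineMap]
  apply Real.arccos_le_arccos
  rw [mul_mul_mul_comm, ← div_div _ (s * t : ℝ)]
  gcongr ?_ / _
  rw [le_div_iff₀' hst]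
  exact hX.mul_compInner_le_compInner_lineMap_lineMap x y z s t

lemma alexAngle_le_compAngle (hX : CAT0 X) {γ₁ γ₂ : ℝ → X} (hxy : x ≠ y) (hxz : x ≠ z)
    (hγ₁ : IsGeodesic x y γ₁) (hγ₂ : IsGeodesic x z γ₂) :
    alexAngle x γ₁ γ₂ ≤ compAngle x y z := by
  refine Filter.limsup_le_of_le (.of_frequently_ge (a := 0) <|
    .of_forall fun t ↦ Real.arccos_nonneg _) ?_
  filter_upwards [Ioc_mem_nhdsGT (lt_min (dist_pos.2 hxy) (dist_pos.2 hxz))] with t ht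
  obtain ⟨s₁, rfl, hs₁⟩ := hX.exists_lineMap_eq hγ₁ ⟨ht.1.le, ht.2.trans (min_le_left _ _)⟩
  obtain ⟨s₂, hs, hs₂⟩ := hX.exists_lineMap_eq hγ₂ ⟨ht.1.le, ht.2.trans (min_le_right _ _)⟩
  rw [hs₁, hs₂]
  exact hX.compAngle_lineMap_lineMap_le x y z (pos_of_mul_pos_left (α := ℝ) ht.1 dist_nonneg)
    (pos_of_mul_pos_left (α := ℝ) (ht.1.trans_eq hs.symm) dist_nonneg)

end CAT0

end Angle

section Flat

namespace CAT0

variable {X : Type*} [MetricSpace X]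

/-- The geodesic triangle with apex `p` and opposite side from `a` to `b` is flat: the distances
from `p` to the points of that side are those in the Euclidean comparison triangle, as computed by
Stewart's theorem. In a CAT(0) space this does not depend on the choice of the apex. -/
def IsFlat (hX : CAT0 X) (p a b : X) : Prop :=
  ∀ s : I, dist p (hX.lineMap a b s) ^ 2 =
    (1 - s) * dist p a ^ 2 + s * dist p b ^ 2 - s * (1 - s) * dist a b ^ 2

variable {hX : CAT0 X} {p a b x y z : X}

lemma isFlat_iff_compInner :
    hX.IsFlat p a b ↔ ∀ s : I, compInner a (hX.lineMap a b s) p = s * compInner a b p := by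
  refine forall_congr' fun s ↦ ?_
  unfold compInner
  rw [dist_left_lineMap, dist_comm (hX.lineMap a b s) p, dist_comm b p, dist_comm a p]
  constructor <;> intro h <;> linarith

namespace IsFlat

lemma subsegment (h : hX.IsFlat p a b) (r q : I) :
    hX.IsFlat p (hX.lineMap a b r) (hX.lineMap a b q) := by
  intro l
  have hw : (1 - l : ℝ) * r + l * q ∈ I := by
    simpa using convex_Icc 0 1 r.2 q.2 (sub_nonneg.2 l.2.2) l.2.1 (sub_add_cancel 1 (l : ℝ))
  rw [hX.lineMap_lineMap_lineMap a b (w := ⟨_, hw⟩) rfl, h, h, h, hX.dist_lineMap_lineMap, mul_pow,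
    sq_abs]
  ring

lemma symm (h : hX.IsFlat p a b) : hX.IsFlat p b a := by
  simpa using h.subsegment 1 0

-- Both sides of the first variation of `u ↦ dist (lineMap a b u) m` at `u = 0` are known: the
-- CN inequality gives one, and `compInner_le_of_dist_eq` the other.
lemma swap_apex (h : hX.IsFlat p a b) : hX.IsFlat b a p := by
  rw [isFlat_iff_compInner] at h ⊢
  intro r
  set m := hX.lineMap a p r
  refine le_antisymm ?_ (hX.mul_compInner_le_compInner_lineMap a p b r)
  set K := (1 - r) / 2 * dist a b ^ 2
  have firstVariation (u : ℝ) (hu : u ∈ Set.Ioc 0 1) :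
      compInner a b m ≤ r * compInner a b p + u * K := by
    let u' : I := ⟨u, hu.1.le, hu.2⟩
    refine le_of_mul_le_mul_left ?_ hu.1
    calc u * compInner a b m
        ≤ compInner a (hX.lineMap a b u') m := hX.mul_compInner_le_compInner_lineMap a b m u'
      _ ≤ r * compInner a (hX.lineMap a b u') p
            + (1 - r) / 2 * dist a (hX.lineMap a b u') ^ 2 :=
          compInner_le_of_dist_eq r.2 (hX.dist_left_lineMap a p r)
            (hX.dist_lineMap_right a p r) _
      _ = u * (r * compInner a b p + u * K) := by
          rw [h u', hX.dist_left_lineMap]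
          ring
  have limit : Filter.Tendsto (fun u ↦ r * compInner a b p + u * K)
      (nhdsWithin 0 (Set.Ioi 0)) (nhds (r * compInner a b p)) := by
    refine (Continuous.tendsto' ?_ 0 _ ?_).mono_left nhdsWithin_le_nhds
    · fun_prop
    · ring
  rw [compInner_comm a m, compInner_comm a p]
  exact ge_of_tendsto limit (Filter.mem_of_superset (Ioc_mem_nhdsGT one_pos) firstVariation)

lemma compInner_lineMap_lineMap (h : hX.IsFlat x y z) (s t : I) :
    compInner x (hX.lineMap x y s) (hX.lineMap x z t) = s * t * compInner x y z := by
  have hz : hX.IsFlat z x y := h.swap_apex.symm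
  have hs : hX.IsFlat (hX.lineMap x y s) x z := by
    simpa using (hz.subsegment 0 s).swap_apex
  rw [compInner_comm, isFlat_iff_compInner.1 hs t, compInner_comm,
    isFlat_iff_compInner.1 hz s]
  ring

end IsFlat

lemma isFlat_of_compAngle_le_alexAngle {γ₁ γ₂ : ℝ → X} (hxy : x ≠ y) (hxz : x ≠ z)
    (hγ₁ : IsGeodesic x y γ₁) (hγ₂ : IsGeodesic x z γ₂)
    (hangle : compAngle x y z ≤ alexAngle x γ₁ γ₂) : hX.IsFlat x y z := by
  suffices hX.IsFlat z x y from this.symm.swap_apex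
  refine isFlat_iff_compInner.2 fun s ↦
    le_antisymm ?_ (hX.mul_compInner_le_compInner_lineMap x y z s)
  rcases eq_or_ne s 0 with rfl | hs
  · simp [compInner]
  have ne : x ≠ hX.lineMap x y s := by
    rw [← dist_pos, dist_left_lineMap]
    exact mul_pos (unitInterval.pos_iff_ne_zero.2 hs) (dist_pos.2 hxy)
  have initial : IsGeodesic x (hX.lineMap x y s) γ₁ := by
    rw [hX.lineMap_of_isGeodesic hγ₁]
    exact hγ₁.initial (mul_dist_mem_Icc s x y)
  have angle_le : compAngle x y z ≤ compAngle x (hX.lineMap x y s) z :=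
    hangle.trans (hX.alexAngle_le_compAngle ne hxz initial hγ₂)
  calc compInner x (hX.lineMap x y s) z
      = s * dist x y * dist x z * Real.cos (compAngle x (hX.lineMap x y s) z) := by
        rw [← dist_mul_dist_mul_cos_compAngle, dist_left_lineMap]
    _ ≤ s * dist x y * dist x z * Real.cos (compAngle x y z) := by
        have := s.2.1
        gcongr
        exact Real.cos_le_cos_of_nonneg_of_le_pi (Real.arccos_nonneg _) (Real.arccos_le_pi _)
          angle_le
    _ = s * compInner x y z := by
        rw [← dist_mul_dist_mul_cos_compAngle]
        ring

end CAT0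

end Flat

section Cone

/-- The parametrization of the triangle with vertices `x`, `y`, `z` in a real vector space as the
cone with apex `x` over the segment from `y` to `z`. -/
noncomputable def affineCone {E : Type*} [AddCommGroup E] [Module ℝ E] (x y z : E) (p : I × I) :
    E :=
  AffineMap.lineMap x (AffineMap.lineMap y z (p.2 : ℝ)) (p.1 : ℝ)

lemma range_affineCone {E : Type*} [AddCommGroup E] [Module ℝ E] (x y z : E) :
    Set.range (affineCone x y z) = convexHull ℝ {x, y, z} := by
  rw [← convexJoin_singleton_segment, segment_eq_image_lineMap]
  ext w
  simp only [mem_convexJoin, Set.mem_singleton_iff, exists_eq_left, segment_eq_image_lineMap]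
  constructor
  · rintro ⟨⟨s, r⟩, rfl⟩
    exact ⟨_, ⟨r, r.2, rfl⟩, s, s.2, rfl⟩
  · rintro ⟨_, ⟨r, hr, rfl⟩, s, hs, rfl⟩
    exact ⟨(⟨s, hs⟩, ⟨r, hr⟩), rfl⟩

namespace CAT0

variable {X : Type*} [MetricSpace X] {hX : CAT0 X} {x y z : X}

/-- The parametrization of a geodesic triangle with vertices `x`, `y`, `z` as the geodesic cone
with apex `x` over the side from `y` to `z`. -/
noncomputable def cone (hX : CAT0 X) (x y z : X) (p : I × I) : X :=
  hX.lineMap x (hX.lineMap y z p.2) p.1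

section Comparison

variable {V P : Type*} [NormedAddCommGroup V] [InnerProductSpace ℝ V] [PseudoMetricSpace P]
  [NormedAddTorsor V P] {x' y' z' : P}

lemma IsFlat.dist_lineMap_lineMap (h : hX.IsFlat x y z) (hxy : dist x' y' = dist x y)
    (hxz : dist x' z' = dist x z) (hyz : dist y' z' = dist y z) (s t : I) :
    dist (hX.lineMap x y s) (hX.lineMap x z t) =
      dist (AffineMap.lineMap x' y' (s : ℝ)) (AffineMap.lineMap x' z' (t : ℝ)) := by
  refine (pow_left_inj₀ dist_nonneg dist_nonneg two_ne_zero).1 ?_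
  have hinner : compInner x' y' z' = compInner x y z := by
    rw [compInner, compInner, hxy, hxz, hyz]
  rw [dist_sq_eq_sub_two_mul_compInner x, dist_sq_eq_sub_two_mul_compInner x',
    h.compInner_lineMap_lineMap, _root_.compInner_lineMap_lineMap, hinner,
    _root_.dist_left_lineMap, _root_.dist_left_lineMap, hX.dist_left_lineMap,
    hX.dist_left_lineMap, hxy, hxz, Real.norm_of_nonneg s.2.1, Real.norm_of_nonneg t.2.1]

lemma IsFlat.dist_lineMap (h : hX.IsFlat x y z) (hxy : dist x' y' = dist x y)
    (hxz : dist x' z' = dist x z) (hyz : dist y' z' = dist y z) (r : I) :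
    dist x (hX.lineMap y z r) = dist x' (AffineMap.lineMap y' z' (r : ℝ)) := by
  refine (pow_left_inj₀ dist_nonneg dist_nonneg two_ne_zero).1 ?_
  rw [h, dist_lineMap_sq, hxy, hxz, hyz]

end Comparison

lemma IsFlat.congruent_cone {E : Type*} [NormedAddCommGroup E] [InnerProductSpace ℝ E]
    {x' y' z' : E} (h : hX.IsFlat x y z) (hxy : dist x' y' = dist x y)
    (hxz : dist x' z' = dist x z) (hyz : dist y' z' = dist y z) :
    hX.cone x y z ≅ affineCone x' y' z' := by
  refine congruent_iff_dist_eq.2 fun p q ↦ ?_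
  refine (h.subsegment p.2 q.2).dist_lineMap_lineMap (h.dist_lineMap hxy hxz hyz p.2).symm
    (h.dist_lineMap hxy hxz hyz q.2).symm ?_ p.1 q.1
  rw [_root_.dist_lineMap_lineMap, hX.dist_lineMap_lineMap, hyz, Real.dist_eq]

end CAT0

end Cone

section ConvexHull

variable {X : Type*} [MetricSpace X]

lemma IsConvexSet.lineMap_mem {C : Set X} (hC : IsConvexSet C) (hX : CAT0 X) {a b : X}
    (ha : a ∈ C) (hb : b ∈ C) (s : I) : hX.lineMap a b s ∈ C :=
  hC a ha b hb _ (hX.1 a b).choose_spec _ (mul_dist_mem_Icc s a b)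

lemma isConvexSet_range_of_congruent {ι E : Type*} [NormedAddCommGroup E] [NormedSpace ℝ E]
    (hX : CAT0 X) {v : ι → X} {w : ι → E} (hvw : v ≅ w) (hw : Convex ℝ (Set.range w)) :
    IsConvexSet (Set.range v) := by
  rintro _ ⟨i, rfl⟩ _ ⟨j, rfl⟩ γ hγ t ht
  obtain ⟨s, -, hs⟩ := hX.exists_lineMap_eq hγ ht
  obtain ⟨k, hk⟩ := hw.lineMap_mem ⟨i, rfl⟩ ⟨j, rfl⟩ s.2
  refine ⟨k, ?_⟩
  rw [hs]
  apply hX.eq_lineMap <;> rw [hvw.dist_eq, hvw.dist_eq, hk]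
  · rw [dist_left_lineMap, Real.norm_of_nonneg s.2.1]
  · rw [dist_lineMap_right, Real.norm_of_nonneg (sub_nonneg.2 s.2.2)]

lemma CAT0.geodesicConvexHull_eq_range_cone (hX : CAT0 X) {x y z : X}
    (h : IsConvexSet (Set.range (hX.cone x y z))) :
    geodesicConvexHull {x, y, z} = Set.range (hX.cone x y z) := by
  apply Set.Subset.antisymm
  · refine Set.sInter_subset_of_mem ⟨h, ?_⟩
    rintro _ (rfl | rfl | rfl)
    · exact ⟨(0, 0), by simp [cone]⟩
    · exact ⟨(1, 0), by simp [cone]⟩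
    · exact ⟨(1, 1), by simp [cone]⟩
  · rintro _ ⟨p, rfl⟩ C ⟨hC, hxyz⟩
    exact hC.lineMap_mem hX (hxyz (by simp))
      (hC.lineMap_mem hX (hxyz (by simp)) (hxyz (by simp)) p.2) p.1

lemma exists_isometry_range_of_congruent {ι Y : Type*} [Nonempty Y] [MetricSpace Y] {v : ι → X}
    {w : ι → Y} (hvw : v ≅ w) :
    ∃ f : X → Y, (∀ p ∈ Set.range v, ∀ q ∈ Set.range v, dist (f p) (f q) = dist p q) ∧
      f '' Set.range v = Set.range w := by
  have factors : w.FactorsThrough v := fun i j hij ↦ by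
    rw [← dist_eq_zero, ← hvw.dist_eq, hij, dist_self]
  let f : X → Y := Function.extend v w fun _ ↦ Classical.arbitrary Y
  have hf (i : ι) : f (v i) = w i := factors.extend_apply _ i
  refine ⟨f, ?_, ?_⟩
  · rintro _ ⟨i, rfl⟩ _ ⟨j, rfl⟩
    rw [hf, hf, hvw.dist_eq]
  · rw [← Set.range_comp]
    exact congrArg Set.range (funext hf)

end ConvexHull

theorem cat0_flat_triangle_general {X E : Type*} [MetricSpace X] [NormedAddCommGroup E]
    [InnerProductSpace ℝ E] (hX : CAT0 X) {x y z : X} (hxy : x ≠ y) (hxz : x ≠ z)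
    {γxy γxz : ℝ → X} (hγxy : IsGeodesic x y γxy) (hγxz : IsGeodesic x z γxz) {x' y' z' : E}
    (h₁ : dist x' y' = dist x y) (h₂ : dist x' z' = dist x z) (h₃ : dist y' z' = dist y z)
    (hangle : alexAngle x γxy γxz = EuclideanGeometry.angle y' x' z') :
    ∃ f : X → E,
      (∀ p ∈ geodesicConvexHull {x, y, z}, ∀ q ∈ geodesicConvexHull {x, y, z},
        dist (f p) (f q) = dist p q) ∧
      f '' geodesicConvexHull {x, y, z} = convexHull ℝ {x', y', z'} := by
  have comparison : EuclideanGeometry.angle y' x' z' = compAngle x y z := by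
    rw [angle_eq_compAngle, compAngle, compAngle, h₁, h₂, h₃]
  have flat : hX.IsFlat x y z :=
    CAT0.isFlat_of_compAngle_le_alexAngle hxy hxz hγxy hγxz (hangle.trans comparison).ge
  have congruent : hX.cone x y z ≅ affineCone x' y' z' := flat.congruent_cone h₁ h₂ h₃
  have convex : IsConvexSet (Set.range (hX.cone x y z)) :=
    isConvexSet_range_of_congruent hX congruent
      (range_affineCone x' y' z' ▸ convex_convexHull ℝ _)
  rw [hX.geodesicConvexHull_eq_range_cone convex, ← range_affineCone]
  exact exists_isometry_range_of_congruent congruent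

/-- Flat triangle rigidity in a CAT(0) space: if the Alexandrov angle of a geodesic
triangle at one vertex equals the corresponding Euclidean comparison angle, then the
triangle with its interior (the convex hull of its vertices) is isometric to the
Euclidean comparison triangle. -/
theorem cat0_flat_triangle {X : Type*} [MetricSpace X] (hX : CAT0 X)
    (x y z : X) (hxy : x ≠ y) (hyz : y ≠ z) (hxz : x ≠ z)
    (γxy γxz : ℝ → X) (hγxy : IsGeodesic x y γxy) (hγxz : IsGeodesic x z γxz)
    (x' y' z' : EuclideanSpace ℝ (Fin 2))
    (h₁ : dist x' y' = dist x y) (h₂ : dist x' z' = dist x z)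
    (h₃ : dist y' z' = dist y z)
    (hangle : alexAngle x γxy γxz = EuclideanGeometry.angle y' x' z') :
    ∃ f : X → EuclideanSpace ℝ (Fin 2),
      (∀ p ∈ geodesicConvexHull {x, y, z}, ∀ q ∈ geodesicConvexHull {x, y, z},
        dist (f p) (f q) = dist p q) ∧
      f '' geodesicConvexHull {x, y, z} = convexHull ℝ {x', y', z'} :=
  cat0_flat_triangle_general hX hxy hxz hγxy hγxz h₁ h₂ h₃ hangle
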